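/- arXiv:0911.4243 — 7 statements merged into one kernel-verified Lean document; each statement's English description precedes it below -/
import Mathlib

section
/- Let R be a commutative local ring in which 2 is invertible, and let a, b be invertible l×l matrices over R with a² = b² = 1 and a ≠ b. For an involution x write V₀^x = image of (1/2)(1+x) and V₁^x = image of (1/2)(1−x), so R^l = V₀^x ⊕ V₁^x. Assume that V₁^a and V₁^b are free R-modules of rank 1. Then a and b commute (ab = ba) if and only if V₁^a ⊆ V₀^b and V₁^b ⊆ V₀^a. -/
/-!
Put `p = (1 - a)/2` and `q = (1 - b)/2`. These are idempotents, `a` and `b` commute iff `p` and `q`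
do, and since `im (1 - q) = ker q`, the two inclusions say exactly that `q p = 0` and `p q = 0`.
So it remains to see that commuting `p`, `q` satisfy `p q = 0`. As `q` commutes with `p`, it
preserves the free rank-one module `im p`, on which it acts by an idempotent scalar; `R` being
local, that scalar is `0` or `1`, so `q p = 0` or `q p = p` (`mul_eq_zero_or_self`). By symmetry
`p q = 0` or `p q = q`. If neither product vanishes, then `p = q p = p q = q`, hence `a = b`.
-/

open IsLocalRing Matrix

/-- An idempotent `q` commuting with `p` acts on the free rank-one module `im p` by an idempotent
scalar, which is `0` or `1` over a local ring. -/
lemma mul_eq_zero_or_self {R M : Type*} [CommRing R] [IsLocalRing R] [AddCommGroup M] [Module R M]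
    (p q : Module.End R M) (hq : q * q = q) (hpq : p * q = q * p)
    (hfree : Module.Free R (LinearMap.range p))
    (hrank : Module.finrank R (LinearMap.range p) = 1) :
    q * p = 0 ∨ q * p = p := by
  let B := Module.basisUnique Unit hrank
  have hspan : ∀ x ∈ LinearMap.range p, ∃ c : R, x = c • (B () : M) := fun x hx =>
    ⟨B.repr ⟨x, hx⟩ (), by
      have h := congrArg Subtype.val (B.sum_repr ⟨x, hx⟩)
      simpa using h.symm⟩
  have hinj : ∀ c : R, c • (B () : M) = 0 → c = 0 := fun c hc => by
    have h : c • B () = 0 := Subtype.ext hc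
    simpa using congrArg (fun y => B.repr y ()) h
  have hqe : q (B ()) ∈ LinearMap.range p := by
    obtain ⟨y, hy⟩ := (B ()).2
    exact ⟨q y, by rw [← hy]; exact LinearMap.congr_fun hpq y⟩
  obtain ⟨c, hc⟩ := hspan _ hqe
  have hcc : c * (1 - c) = 0 := by
    apply hinj
    have h := LinearMap.congr_fun hq (B () : M)
    rw [Module.End.mul_apply, hc, map_smul, hc] at h
    rw [mul_sub, mul_one, sub_smul, mul_smul, h, sub_self]
  have hc01 : c = 0 ∨ c = 1 := by
    rcases IsLocalRing.isUnit_or_isUnit_one_sub_self c with h | h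
    · exact Or.inr (sub_eq_zero.1 (h.mul_right_eq_zero.1 hcc)).symm
    · exact Or.inl (h.mul_left_eq_zero.1 hcc)
  refine hc01.imp (fun h => ?_) (fun h => ?_) <;> ext v <;>
    obtain ⟨d, hd⟩ := hspan (p v) ⟨v, rfl⟩ <;>
    simp [hd, hc, h]

/-- `im (1 - q) = ker q` for idempotent `q`, so the inclusion is the vanishing of `q p`. -/
lemma range_le_range_one_sub_iff {R M : Type*} [CommRing R] [AddCommGroup M] [Module R M]
    (p q : Module.End R M) (hq : q * q = q) :
    LinearMap.range p ≤ LinearMap.range (1 - q) ↔ q * p = 0 := by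
  constructor
  · intro h
    ext v
    obtain ⟨w, hw⟩ := h ⟨v, rfl⟩
    have := LinearMap.congr_fun hq w
    simp only [Module.End.mul_apply] at this
    simp [← hw, this]
  · rintro h _ ⟨v, rfl⟩
    have := LinearMap.congr_fun h v
    simp only [Module.End.mul_apply] at this
    exact ⟨p v, by simp [this]⟩

/-- Over a commutative local ring `R` with `1/2`, let `a, b` be invertible involutions with
`a ≠ b` whose `(−1)`-eigensubmodules `V₁ˣ = im((1/2)(1−x))` are free of rank 1. Then
`a` and `b` commute iff `V₁ᵃ ⊆ V₀ᵇ` and `V₁ᵇ ⊆ V₀ᵃ`, where `V₀ˣ = im((1/2)(1+x))`. -/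
theorem stmt_2 {R : Type*} [CommRing R] [IsLocalRing R] [Invertible (2 : R)] {l : ℕ}
    (a b : Matrix (Fin l) (Fin l) R) (hau : IsUnit a) (hbu : IsUnit b)
    (ha : a * a = 1) (hb : b * b = 1) (hne : a ≠ b)
    (hafree : Module.Free R (LinearMap.range (Matrix.toLin' (⅟(2 : R) • (1 - a)))))
    (harank : Module.finrank R (LinearMap.range (Matrix.toLin' (⅟(2 : R) • (1 - a)))) = 1)
    (hbfree : Module.Free R (LinearMap.range (Matrix.toLin' (⅟(2 : R) • (1 - b)))))
    (hbrank : Module.finrank R (LinearMap.range (Matrix.toLin' (⅟(2 : R) • (1 - b)))) = 1) :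
    a * b = b * a ↔
      LinearMap.range (Matrix.toLin' (⅟(2 : R) • (1 - a))) ≤
        LinearMap.range (Matrix.toLin' (⅟(2 : R) • (1 + b))) ∧
      LinearMap.range (Matrix.toLin' (⅟(2 : R) • (1 - b))) ≤
        LinearMap.range (Matrix.toLin' (⅟(2 : R) • (1 + a))) := by
  have half : ∀ x : Matrix (Fin l) (Fin l) R,
      toLin' (⅟(2 : R) • (1 + x)) = 1 - toLin' (⅟(2 : R) • (1 - x)) := fun x => by
    have h1 : (1 : Matrix (Fin l) (Fin l) R) = ⅟(2 : R) • ((2 : R) • 1) := by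
      rw [smul_smul, invOf_mul_self, one_smul]
    have h : ⅟(2 : R) • (1 + x) = 1 - ⅟(2 : R) • (1 - x) := by
      nth_rw 2 [h1]
      rw [← smul_sub, two_smul]
      congr 1
      abel
    rw [h, map_sub, toLin'_one]
    rfl
  have idem : ∀ x : Matrix (Fin l) (Fin l) R, x * x = 1 →
      toLin' (⅟(2 : R) • (1 - x)) * toLin' (⅟(2 : R) • (1 - x)) =
        toLin' (⅟(2 : R) • (1 - x)) := fun x hx => by
    rw [Module.End.mul_eq_comp, ← toLin'_mul]
    congr 1
    have h : (1 - x) * (1 - x) = (2 : R) • (1 - x) := by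
      rw [mul_sub, sub_mul, sub_mul, hx, two_smul]
      simp only [one_mul, mul_one]
      abel
    rw [smul_mul_smul_comm, h, smul_smul, mul_assoc, invOf_mul_self, mul_one]
  have recover : ∀ x : Matrix (Fin l) (Fin l) R, x = 1 - (2 : R) • (⅟(2 : R) • (1 - x)) :=
    fun x => by rw [smul_smul, mul_invOf_self, one_smul, sub_sub_cancel]
  have comm : a * b = b * a ↔
      toLin' (⅟(2 : R) • (1 - a)) * toLin' (⅟(2 : R) • (1 - b)) =
        toLin' (⅟(2 : R) • (1 - b)) * toLin' (⅟(2 : R) • (1 - a)) := by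
    rw [Module.End.mul_eq_comp, Module.End.mul_eq_comp, ← toLin'_mul, ← toLin'_mul,
      toLin'.injective.eq_iff]
    constructor
    · intro h
      have hab : Commute a b := h
      exact ((((Commute.one_left _).sub_left (((Commute.one_right _).sub_right hab))).smul_left
        _).smul_right _).eq
    · intro h
      have hpq : Commute (⅟(2 : R) • (1 - a)) (⅟(2 : R) • (1 - b)) := h
      rw [recover a, recover b]
      exact ((Commute.one_left _).sub_left
        ((Commute.one_right _).sub_right ((hpq.smul_left _).smul_right _))).eq
  have hpne : toLin' (⅟(2 : R) • (1 - a)) ≠ toLin' (⅟(2 : R) • (1 - b)) := fun h => hne <| by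
    rw [recover a, recover b, toLin'.injective h]
  rw [half, half, comm, range_le_range_one_sub_iff _ _ (idem b hb),
    range_le_range_one_sub_iff _ _ (idem a ha)]
  have ia := idem a ha
  have ib := idem b hb
  generalize toLin' (⅟(2 : R) • (1 - a)) = p at *
  generalize toLin' (⅟(2 : R) • (1 - b)) = q at *
  refine ⟨fun h => ?_, fun h => h.2.trans h.1.symm⟩
  rcases mul_eq_zero_or_self p q ib h hafree harank with h1 | h1
  · exact ⟨h1, h.trans h1⟩
  rcases mul_eq_zero_or_self q p ia h.symm hbfree hbrank with h2 | h2
  · exact ⟨h.symm.trans h2, h2⟩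
  · exact absurd (h1.symm.trans (h.symm.trans h2)) hpne
end

section
/- Let R be a commutative local ring with maximal ideal J in which 2 is invertible, l ≥ 2, and let w̃₁ be the l×l matrix over R that agrees with the identity matrix except that its 2×2 block on rows and columns 1, 2 equals [[−1,1],[0,1]]. Let A be an l×l matrix over R with A² = 1 that is congruent to w̃₁ modulo J (all entries of A − w̃₁ lie in J). Then there exists an invertible l×l matrix C over R such that C⁻¹ A C = w̃₁. -/
/-!
Two involutions `A` and `W` are intertwined by `C = 1 + A * W`, since `A * C = A + W = C * W`.
When `A` is congruent to `W` modulo the maximal ideal, `C` reduces to `1 + W * W = 2` over the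
residue field, so `det C` reduces to `2 ^ l ≠ 0` and is a unit of the local ring
(`isUnit_one_add_mul`). It remains to know that `W = weylB l R 1` is an involution
(`weylB_one_mul_self`).
-/

/-- The `l × l` matrix of the `i`-th simple Weyl reflection of the root system `B_l`
(for `1 ≤ i ≤ l`, indexed from 1) acting on the Cartan part of the adjoint representation:
it agrees with the identity matrix except in row `i` (1-indexed), where
* for `i = 1`: entries `(1,1) = −1`, `(1,2) = 1`;
* for `2 ≤ i ≤ l−1`: entries `(i,i−1) = 1`, `(i,i) = −1`, `(i,i+1) = 1`;
* for `i = l`: entries `(l,l−1) = 2`, `(l,l) = −1`. -/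
def weylB (l : ℕ) (R : Type*) [CommRing R] (i : ℕ) : Matrix (Fin l) (Fin l) R :=
  Matrix.of fun p q =>
    if p.val + 1 ≠ i then (if p = q then 1 else 0)
    else if q = p then -1
    else if i = 1 then (if q.val = 1 then 1 else 0)
    else if i = l then (if q.val + 2 = l then 2 else 0)
    else if q.val + 2 = i ∨ q.val = i then 1 else 0

theorem weylB_one_mul_self {R : Type*} [CommRing R] {l : ℕ} (hl : 2 ≤ l) :
    weylB l R 1 * weylB l R 1 = 1 := by
  obtain ⟨n, rfl⟩ := Nat.exists_eq_add_of_le' hl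
  have hs : ∀ (p : Fin (n + 1)) q,
      weylB (n + 2) R 1 p.succ q = (1 : Matrix (Fin (n + 2)) (Fin (n + 2)) R) p.succ q := by
    intro p q
    simp [weylB, Matrix.one_apply]
  have h0 : weylB (n + 2) R 1 0 0 = -1 := by simp [weylB]
  have h1 : weylB (n + 2) R 1 0 (Fin.succ 0) = 1 := by simp [weylB]
  have h2 : ∀ j : Fin n, weylB (n + 2) R 1 0 j.succ.succ = 0 := by
    intro j
    simp only [weylB, Matrix.of_apply, Fin.val_succ]
    simp
  ext p q
  rw [Matrix.mul_apply]
  refine Fin.cases ?_ (fun p => ?_) p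
  · rw [Fin.sum_univ_succ, Fin.sum_univ_succ]
    simp only [h0, h1, h2, hs, zero_mul, Finset.sum_const_zero, add_zero, one_mul]
    refine Fin.cases ?_ (fun q => Fin.cases ?_ (fun q => ?_) q) q
    · rw [h0]; simp [Matrix.one_apply]
    · rw [h1]; simp [Matrix.one_apply]
    · rw [h2]; simp only [Matrix.one_apply, Fin.succ_inj]; simp [Fin.ext_iff]
  · simp only [hs]
    rw [← Matrix.mul_apply, one_mul, hs]

theorem isUnit_one_add_mul {R : Type*} [CommRing R] [IsLocalRing R] [Invertible (2 : R)]
    {l : ℕ} {A W : Matrix (Fin l) (Fin l) R} (hW : W * W = 1)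
    (hcong : ∀ p q, (A - W) p q ∈ IsLocalRing.maximalIdeal R) :
    IsUnit (1 + A * W) := by
  have hAW : (IsLocalRing.residue R).mapMatrix A = (IsLocalRing.residue R).mapMatrix W := by
    rw [← sub_eq_zero, ← map_sub]
    ext p q
    exact (IsLocalRing.residue_eq_zero_iff _).2 (hcong p q)
  have hmap : (IsLocalRing.residue R).mapMatrix (1 + A * W) =
      (IsLocalRing.residue R).mapMatrix 2 := by
    rw [map_add, map_mul, hAW, ← map_mul, hW, ← map_add, one_add_one_eq_two]
  have h2 : IsUnit (2 : Matrix (Fin l) (Fin l) R) := by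
    simpa only [map_ofNat] using
      (isUnit_of_invertible (2 : R)).map (algebraMap R (Matrix (Fin l) (Fin l) R))
  rw [Matrix.isUnit_iff_isUnit_det, ← isUnit_map_iff (IsLocalRing.residue R), RingHom.map_det,
    hmap, ← Matrix.isUnit_iff_isUnit_det]
  exact h2.map _

/-- Over a commutative local ring `R` with `1/2` and `l ≥ 2`, every involution `A` congruent
modulo the maximal ideal to the first simple-reflection matrix `w̃₁` of `B_l` is conjugate
to `w̃₁` by an invertible matrix. -/
theorem stmt_3 {R : Type*} [CommRing R] [IsLocalRing R] [Invertible (2 : R)] {l : ℕ}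
    (hl : 2 ≤ l) (A : Matrix (Fin l) (Fin l) R) (hA : A * A = 1)
    (hcong : ∀ p q, (A - weylB l R 1) p q ∈ IsLocalRing.maximalIdeal R) :
    ∃ C : (Matrix (Fin l) (Fin l) R)ˣ,
      (↑C⁻¹ : Matrix (Fin l) (Fin l) R) * A * (↑C : Matrix (Fin l) (Fin l) R) =
        weylB l R 1 := by
  have hW : weylB l R 1 * weylB l R 1 = 1 := weylB_one_mul_self hl
  have hunit : IsUnit (1 + A * weylB l R 1) := isUnit_one_add_mul hW hcong
  obtain ⟨C, hC⟩ := hunit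
  refine ⟨C, ?_⟩
  rw [mul_assoc, Units.inv_mul_eq_iff_eq_mul, hC, mul_add, add_mul, ← mul_assoc, hA, mul_assoc A, hW]
  simp [add_comm]
end

section
/- Let R be a commutative local ring with maximal ideal J in which 2 is invertible, l ≥ 3, and fix i with 2 ≤ i ≤ l−1. Let w̃₁, …, w̃_l be the l×l matrices of the simple Weyl reflections of B_l (defined in the context). Let A be an l×l matrix over R such that: (1) A² = 1; (2) A is congruent to w̃_i modulo J; (3) A commutes with w̃_j for every 1 ≤ j ≤ i−2; (4) w̃_{i−1} A w̃_{i−1} = A w̃_{i−1} A. Then there exists an invertible l×l matrix C over R that commutes with w̃₁, …, w̃_{i−1} and satisfies C⁻¹ A C = w̃_i. -/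
open Matrix IsLocalRing

/-- The linear form `f_j` (as a row vector, `j` counted from zero) with
`w̃_{j+1} v = v + f_j(v) e_j` when `w̃_{j+1}` is not the last reflection of `B_l`; it is minus
the `j`-th row of the Cartan matrix of type `A`. -/
def weylForm {l : ℕ} (R : Type*) [CommRing R] (j : Fin l) : Fin l → R := fun q =>
  if q = j then -2 else if q.val + 1 = j.val ∨ q.val = j.val + 1 then 1 else 0

lemma weylB_eq {l : ℕ} (R : Type*) [CommRing R] (j : Fin l) (hj : j.val + 1 < l) :
    weylB l R (j.val + 1) = 1 + vecMulVec (Pi.single j 1) (weylForm R j) := by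
  ext p q
  by_cases hp : p = j
  · subst hp
    by_cases hq : q = p
    · subst hq
      simp [weylB, vecMulVec_apply, weylForm]; ring
    · have hqv : q.val ≠ p.val := fun h => hq (Fin.ext h)
      simp only [weylB, of_apply, ne_eq, not_true, if_false, hq, vecMulVec_apply, weylForm,
        Matrix.add_apply, Pi.single_eq_same, one_mul, Matrix.one_apply_ne (Ne.symm hq), zero_add]
      split_ifs <;> first | rfl | omega
  · have hpv : p.val ≠ j.val := fun h => hp (Fin.ext h)
    simp [weylB, vecMulVec_apply, hp, hpv, Matrix.one_apply]

lemma isUnit_of_residue_eq {R : Type*} [CommRing R] [IsLocalRing R] {l : ℕ}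
    {X Y : Matrix (Fin l) (Fin l) R} (h : ∀ p q, residue R (X p q) = residue R (Y p q))
    (hY : IsUnit Y) : IsUnit X := by
  rw [isUnit_iff_isUnit_det] at hY ⊢
  refine isUnit_of_map_unit (residue R) _ ?_
  have e : (residue R).mapMatrix X = (residue R).mapMatrix Y := by ext p q; exact h p q
  rw [RingHom.map_det, e, ← RingHom.map_det]
  exact hY.map _

/-- The identity `φ(e) u ⊗ f = f(u) e ⊗ φ` expressing that `1 + u ⊗ φ` and `1 + e ⊗ f`
commute, read entrywise. -/
lemma commute_entries {R : Type*} [CommRing R] {l : ℕ} {u φ e f : Fin l → R}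
    (h : (1 + vecMulVec u φ) * (1 + vecMulVec e f) = (1 + vecMulVec e f) * (1 + vecMulVec u φ))
    (p q : Fin l) : (φ ⬝ᵥ e) * (u p * f q) = (f ⬝ᵥ u) * (e p * φ q) := by
  have := congrFun (congrFun h p) q
  simp only [mul_add, add_mul, one_mul, mul_one, vecMulVec_mul_vecMulVec, Matrix.add_apply,
    vecMulVec_apply, Pi.smul_apply, smul_eq_mul] at this
  linear_combination this

/-- For two reflections `1 + u ⊗ φ` and `1 + e ⊗ f` the braid relation says
`(1 - f(u) φ(e)) (u ⊗ φ - e ⊗ f) = 0`; this is read entrywise. -/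
lemma braid_entries {R : Type*} [CommRing R] {l : ℕ} {u φ e f : Fin l → R}
    (hu : φ ⬝ᵥ u = -2) (he : f ⬝ᵥ e = -2)
    (h : (1 + vecMulVec e f) * (1 + vecMulVec u φ) * (1 + vecMulVec e f) =
      (1 + vecMulVec u φ) * (1 + vecMulVec e f) * (1 + vecMulVec u φ))
    (p q : Fin l) : (1 - (f ⬝ᵥ u) * (φ ⬝ᵥ e)) * (u p * φ q) =
      (1 - (f ⬝ᵥ u) * (φ ⬝ᵥ e)) * (e p * f q) := by
  have := congrFun (congrFun h p) q
  simp only [mul_add, add_mul, one_mul, mul_one, vecMulVec_mul_vecMulVec, Matrix.add_apply,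
    vecMulVec_apply, smul_eq_mul, hu, he,
    vecMulVec_smul, Matrix.smul_mul, Matrix.smul_apply] at this
  linear_combination this

/-- An involution congruent modulo the maximal ideal to a reflection `1 + e_i ⊗ f` is itself
`1 + u ⊗ φ` with `φ(u) = -2`, `u` congruent to `e_i` and `φ` to `f`. The pair `(u, φ)` is
determined up to a unit; it is normalized by `φ h = 1`. -/
lemma exists_rank_one {R : Type*} [CommRing R] [IsLocalRing R] [Invertible (2 : R)] {l : ℕ}
    {A : Matrix (Fin l) (Fin l) R} (hA : A * A = 1) {i h : Fin l} {f : Fin l → R}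
    (hfi : f i = -2) (hfh : f h = 1)
    (hcong : ∀ p q, residue R (A p q) =
      residue R ((1 + vecMulVec (Pi.single i 1) f : Matrix (Fin l) (Fin l) R) p q)) :
    ∃ u φ : Fin l → R, A = 1 + vecMulVec u φ ∧ φ ⬝ᵥ u = -2 ∧ φ h = 1 ∧
      (∀ p, residue R (u p) = residue R ((Pi.single i 1 : Fin l → R) p)) ∧
      ∀ q, residue R (φ q) = residue R (f q) := by
  obtain ⟨M, rfl⟩ : ∃ M, A = 1 + M := ⟨A - 1, by abel⟩
  have hM2 : M * M = -2 • M := by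
    have : (1 + M) * (1 + M) = 1 + (M * M + (2 : ℤ) • M) := by noncomm_ring
    rw [this] at hA
    have := add_eq_left.mp hA
    rw [neg_smul]; exact eq_neg_of_add_eq_zero_left this
  have hMres : ∀ p q, residue R (M p q) =
      residue R ((Pi.single i 1 : Fin l → R) p) * residue R (f q) := by
    intro p q
    have := hcong p q
    simpa [vecMulVec_apply] using this
  have h2 : IsUnit (2 : R) := isUnit_of_invertible 2
  have hii : IsUnit (M i i) := by
    refine isUnit_of_map_unit (residue R) _ ?_
    rw [hMres, ← map_mul]
    exact IsUnit.map _ (by simpa [hfi] using h2)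
  have hih : IsUnit (M i h) := by
    refine isUnit_of_map_unit (residue R) _ ?_
    rw [hMres, ← map_mul]
    exact IsUnit.map _ (by simp [hfh])
  obtain ⟨m, hm⟩ := hii.exists_right_inv
  obtain ⟨n, hn⟩ := hih.exists_right_inv
  have hnres : residue R n = 1 := by
    have := congrArg (residue R) hn
    simpa [hMres, hfh] using this
  have hmres : residue R m * residue R (f i) = 1 := by
    have := congrArg (residue R) hm
    rw [map_mul, hMres] at this
    simpa [mul_comm] using this
  let u : Fin l → R := fun p => m * M i h * M p i
  let φ : Fin l → R := fun q => n * M i q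
  have hrow : ∀ q, ∑ r, M i r * M r q = -2 * M i q := fun q => by
    have := congrFun (congrFun hM2 i) q
    simpa [mul_apply] using this
  have hφM : φ ᵥ* M = (-2 : R) • φ := by
    ext q
    simp only [vecMul, dotProduct, φ, Pi.smul_apply, smul_eq_mul, mul_assoc, ← Finset.mul_sum]
    rw [hrow]; ring
  -- `N * (M + 2) = 0`, and since `N e_i = 0` the factor `M + 2` may be replaced by
  -- `M + 2 - e_i ⊗ f`, which is invertible because it is congruent to the scalar matrix `2`.
  let N := M - vecMulVec u φ
  have hNi : N *ᵥ Pi.single i 1 = 0 := by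
    ext p
    simp only [N, mulVec_single_one, col_apply, Matrix.sub_apply, vecMulVec_apply, u, φ,
      Pi.zero_apply]
    linear_combination (-(M p i)) * (m * M i i * hn + hm)
  have hNM : N * (M + (2 : R) • 1 - vecMulVec (Pi.single i 1) f) = 0 := by
    rw [mul_sub, mul_vecMulVec, hNi, zero_vecMulVec, sub_zero, mul_add]
    have : N * M = (-2 : R) • N := by
      simp only [N, sub_mul, vecMulVec_mul, hφM, hM2, vecMulVec_smul, smul_sub]
      congr 1
      ext; simp
    rw [this]; simp
  have hunit : IsUnit (M + (2 : R) • 1 - vecMulVec (Pi.single i 1) f) := by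
    refine isUnit_of_residue_eq (Y := (2 : R) • 1) (fun p q => ?_) ?_
    · simp only [Matrix.sub_apply, Matrix.add_apply, map_sub, map_add, hMres, vecMulVec_apply,
        map_mul]
      ring
    · rw [isUnit_iff_isUnit_det, det_smul, det_one, mul_one]
      exact h2.pow _
  have hN : N = 0 := hunit.mul_left_eq_zero.mp hNM
  refine ⟨u, φ, ?_, ?_, ?_, fun p => ?_, fun q => ?_⟩
  · rw [sub_eq_zero.mp hN]
  · have : φ ⬝ᵥ u = n * m * M i h * ∑ r, M i r * M r i := by
      simp only [dotProduct, φ, u, Finset.mul_sum]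
      exact Finset.sum_congr rfl fun _ _ => by ring
    rw [this, hrow]
    linear_combination (-2) * (m * M i i * hn + hm)
  · simp only [φ]; rw [mul_comm, hn]
  · simp only [u, map_mul, hMres, hfh, Pi.single_eq_same, map_one, mul_one]
    linear_combination residue R ((Pi.single i 1 : Fin l → R) p) * hmres
  · simp only [φ, map_mul, hMres, hnres, Pi.single_eq_same, map_one, one_mul]

/-- An invertible `C` that sends `e_i` to `u` and pulls `φ` back to `f`. It modifies the identity
only in the `i`-th column and the `k`-th row, so it fixes the basis vectors `e_j`, `j ≠ i`, on
which `φ` and `f` agree, and the forms that vanish on `e_k` and take equal values on `u` and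
`e_i`. It is invertible because it is congruent to `1` modulo the maximal ideal. -/
lemma exists_conj {R : Type*} [CommRing R] [IsLocalRing R] {l : ℕ} {i k : Fin l}
    {u φ f : Fin l → R} (hfi : f i = -2) (hfk : f k = 1) (hφu : φ ⬝ᵥ u = -2)
    (hu : ∀ p, residue R (u p) = residue R ((Pi.single i 1 : Fin l → R) p))
    (hφ : ∀ q, residue R (φ q) = residue R (f q)) :
    ∃ C : (Matrix (Fin l) (Fin l) R)ˣ,
      C.val *ᵥ Pi.single i 1 = u ∧ φ ᵥ* C.val = f ∧
      (∀ j, j ≠ i → φ j = f j → C.val *ᵥ Pi.single j 1 = Pi.single j 1) ∧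
      ∀ g : Fin l → R, g k = 0 → g ⬝ᵥ u = g i → g ᵥ* C.val = g := by
  have hk : IsUnit (φ k) := by
    refine isUnit_of_map_unit (residue R) _ ?_
    rw [hφ, hfk, map_one]; exact isUnit_one
  obtain ⟨b, hb⟩ := hk.exists_right_inv
  let x : Fin l → R := u - Pi.single i 1 + (b * (φ i - f i)) • Pi.single k 1
  let C : Matrix (Fin l) (Fin l) R :=
    1 - b • vecMulVec (Pi.single k 1) (φ - f) + vecMulVec x (Pi.single i 1)
  have hC : IsUnit C := by
    refine isUnit_of_residue_eq (Y := 1) (fun p q => ?_) isUnit_one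
    simp [C, x, vecMulVec_apply, hu, hφ]
  have hcol : ∀ j, C *ᵥ Pi.single j 1 = Pi.single j 1 - (b * (φ j - f j)) • Pi.single k 1 +
      (Pi.single i 1 : Fin l → R) j • x := by
    intro j
    ext p
    simp only [C, mulVec_single_one, col_apply, Matrix.add_apply, Matrix.sub_apply,
      Matrix.smul_apply, vecMulVec_apply, Matrix.one_apply, Pi.add_apply, Pi.sub_apply,
      Pi.smul_apply, smul_eq_mul, Pi.single_apply]
    ring
  have hrow : ∀ g : Fin l → R, g ᵥ* C = g - (b * g k) • (φ - f) + (g ⬝ᵥ x) • Pi.single i 1 := by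
    intro g
    simp only [C, vecMul_add, vecMul_sub, vecMul_one, vecMul_smul, vecMul_vecMulVec,
      dotProduct_single_one, smul_smul]
  have hgx : ∀ g : Fin l → R, g ⬝ᵥ x = g ⬝ᵥ u - g i + b * (φ i - f i) * g k := by
    intro g
    simp only [x, dotProduct_add, dotProduct_sub, dotProduct_smul, dotProduct_single_one,
      smul_eq_mul]
  obtain ⟨U, hU⟩ := hC
  refine ⟨U, ?_, ?_, fun j hj hφj => ?_, fun g hgk hgu => ?_⟩ <;> rw [hU]
  · rw [hcol]; simp [x]
  · have h0 : φ ⬝ᵥ x = 0 := by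
      rw [hgx, hφu, hfi]; linear_combination (φ i + 2) * hb
    rw [hrow, h0, mul_comm, hb]; simp
  · rw [hcol]; simp [hj, hφj]
  · rw [hrow, hgx, hgk, hgu]; simp

/-- Over a commutative local ring `R` with `1/2`, `l ≥ 3` and `2 ≤ i ≤ l−1`: if an involution
`A` is congruent to `w̃ᵢ` modulo the maximal ideal, commutes with `w̃ⱼ` for `1 ≤ j ≤ i−2`, and
satisfies the braid relation `w̃_{i−1} A w̃_{i−1} = A w̃_{i−1} A`, then `A` is conjugate to
`w̃ᵢ` by an invertible matrix commuting with `w̃₁, …, w̃_{i−1}`. -/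
theorem stmt_4 {R : Type*} [CommRing R] [IsLocalRing R] [Invertible (2 : R)] {l i : ℕ}
    (hl : 3 ≤ l) (hi2 : 2 ≤ i) (hil : i ≤ l - 1)
    (A : Matrix (Fin l) (Fin l) R) (hA : A * A = 1)
    (hcong : ∀ p q, (A - weylB l R i) p q ∈ IsLocalRing.maximalIdeal R)
    (hcomm : ∀ j, 1 ≤ j → j ≤ i - 2 → A * weylB l R j = weylB l R j * A)
    (hbraid : weylB l R (i - 1) * A * weylB l R (i - 1) =
      A * weylB l R (i - 1) * A) :
    ∃ C : (Matrix (Fin l) (Fin l) R)ˣ,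
      (∀ j, 1 ≤ j → j ≤ i - 1 →
        (↑C : Matrix (Fin l) (Fin l) R) * weylB l R j =
          weylB l R j * (↑C : Matrix (Fin l) (Fin l) R)) ∧
      (↑C⁻¹ : Matrix (Fin l) (Fin l) R) * A * (↑C : Matrix (Fin l) (Fin l) R) =
        weylB l R i := by
  -- `h₀`, `i₀`, `k₀` are the zero-based positions of the one-based indices `i - 1`, `i`, `i + 1`.
  obtain ⟨n, rfl⟩ : ∃ n, i = n + 2 := ⟨i - 2, by omega⟩
  have hnl : n + 2 < l := by omega
  let h₀ : Fin l := ⟨n, by omega⟩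
  let i₀ : Fin l := ⟨n + 1, by omega⟩
  let k₀ : Fin l := ⟨n + 2, by omega⟩
  have hwi : weylB l R (n + 2) = 1 + vecMulVec (Pi.single i₀ 1) (weylForm R i₀) :=
    weylB_eq R i₀ hnl
  have hwh : weylB l R (n + 2 - 1) = 1 + vecMulVec (Pi.single h₀ 1) (weylForm R h₀) :=
    weylB_eq R h₀ (by simp only [h₀]; omega)
  have h2 : IsUnit (2 : R) := isUnit_of_invertible 2
  have hself : ∀ j : Fin l, weylForm R j j = -2 := fun j => by simp [weylForm]
  have hfh : weylForm R i₀ h₀ = 1 := by simp [weylForm, i₀, h₀]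
  have hfk : weylForm R i₀ k₀ = 1 := by simp [weylForm, i₀, k₀]
  obtain ⟨u, φ, rfl, hφu, hφh, hu, hφ⟩ := exists_rank_one hA (hself i₀) hfh (fun p q => by
    rw [← hwi, ← sub_eq_zero, ← map_sub]
    exact (residue_eq_zero_iff _).mpr (hcong p q))
  have hui : IsUnit (u i₀) := by
    refine isUnit_of_map_unit (residue R) _ ?_
    rw [hu]; simp
  have hφk : IsUnit (φ k₀) := by
    refine isUnit_of_map_unit (residue R) _ ?_
    rw [hφ, hfk]; simp
  have hfu : weylForm R h₀ ⬝ᵥ u = 1 := by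
    rw [hwh] at hbraid
    have := braid_entries hφu (by simp [hself]) hbraid i₀ k₀
    rw [dotProduct_single_one, hφh, Pi.single_eq_of_ne (by simp [i₀, h₀]), zero_mul, mul_zero,
      mul_one, (hui.mul hφk).mul_left_eq_zero] at this
    exact (sub_eq_zero.mp this).symm
  have hsmall : ∀ j : Fin l, j.val < n → φ j = 0 ∧ weylForm R j ⬝ᵥ u = 0 := by
    intro j hj
    have hc := hcomm (j.val + 1) (by omega) (by omega)
    rw [weylB_eq R j (by omega)] at hc
    have e1 := commute_entries hc i₀ j
    rw [dotProduct_single_one, Pi.single_eq_of_ne (by simp [i₀, Fin.ext_iff]; omega), zero_mul,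
      mul_zero, hself, (hui.mul h2.neg).mul_left_eq_zero] at e1
    have e2 := commute_entries hc j k₀
    rw [dotProduct_single_one, e1, zero_mul, Pi.single_eq_same, one_mul, eq_comm,
      hφk.mul_left_eq_zero] at e2
    exact ⟨e1, e2⟩
  obtain ⟨C, hCi, hCφ, hCcol, hCrow⟩ :=
    exists_conj (i := i₀) (k := k₀) (hself i₀) hfk hφu hu hφ
  refine ⟨C, fun j hj1 hj2 => ?_, ?_⟩
  · obtain ⟨j, rfl⟩ : ∃ t, j = t + 1 := ⟨j - 1, by omega⟩
    let j₀ : Fin l := ⟨j, by omega⟩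
    have hw : weylB l R (j + 1) = 1 + vecMulVec (Pi.single j₀ 1) (weylForm R j₀) :=
      weylB_eq R j₀ (by simp only [j₀]; omega)
    have hji : j₀ ≠ i₀ := by simp [j₀, i₀]; omega
    have hk0 : weylForm R j₀ k₀ = 0 := by
      simp only [weylForm, j₀, k₀, Fin.mk.injEq]
      rw [if_neg (by omega), if_neg (by omega)]
    have hval : φ j₀ = weylForm R i₀ j₀ ∧ weylForm R j₀ ⬝ᵥ u = weylForm R j₀ i₀ := by
      rcases (show j = n ∨ j < n by omega) with rfl | hlt
      · exact ⟨hφh.trans hfh.symm, hfu.trans (by simp [weylForm, i₀, j₀])⟩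
      · obtain ⟨e1, e2⟩ := hsmall j₀ hlt
        rw [e1, e2]
        simp only [weylForm, j₀, i₀, Fin.mk.injEq]
        constructor <;> rw [if_neg (by omega), if_neg (by omega)]
    rw [hw, mul_add, add_mul, mul_one, one_mul, mul_vecMulVec, vecMulVec_mul,
      hCcol j₀ hji hval.1, hCrow _ hk0 hval.2]
  · rw [mul_assoc, Units.inv_mul_eq_iff_eq_mul, hwi, mul_add, add_mul, mul_one, one_mul,
      mul_vecMulVec, vecMulVec_mul, hCi, hCφ]
end

section
/- Let R be a commutative local ring with maximal ideal J in which 2 is invertible, l ≥ 2, and let w̃₁, …, w̃_l be the l×l matrices of the simple Weyl reflections of B_l (defined in the context). Let A be an l×l matrix over R such that: (1) A² = 1; (2) A is congruent to w̃_l modulo J; (3) A commutes with w̃_j for every 1 ≤ j ≤ l−2; (4) w̃_{l−1} A w̃_{l−1} A = A w̃_{l−1} A w̃_{l−1}. Then there exists an invertible l×l matrix C over R that commutes with w̃₁, …, w̃_{l−1} and satisfies C⁻¹ A C = w̃_l. -/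
/-! ### The orthonormal basis -/

/-- The difference operator `y_p = x_p - x_{p-1}` (with `x_{-1} = 0`): the base change to the
orthonormal basis of `B_l`. -/
def diffMat (l : ℕ) (R : Type*) [CommRing R] : Matrix (Fin l) (Fin l) R :=
  Matrix.of fun p q => (if q = p then 1 else 0) - (if q.val + 1 = p.val then 1 else 0)

lemma diffMat_mul_zero {R : Type*} [CommRing R] {n : ℕ}
    (M : Matrix (Fin (n + 2)) (Fin (n + 2)) R) (q : Fin (n + 2)) :
    (diffMat (n + 2) R * M) 0 q = M 0 q := by
  simp [Matrix.mul_apply, diffMat]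

lemma diffMat_mul_succ {R : Type*} [CommRing R] {n : ℕ}
    (M : Matrix (Fin (n + 2)) (Fin (n + 2)) R) (p : Fin (n + 1)) (q : Fin (n + 2)) :
    (diffMat (n + 2) R * M) p.succ q = M p.succ q - M p.castSucc q := by
  have h : ∀ r : Fin (n + 2), r.val + 1 = p.succ.val ↔ r = p.castSucc := by
    intro r; simp [Fin.ext_iff]
  simp only [Matrix.mul_apply, diffMat, Matrix.of_apply, h]
  simp [sub_mul, Finset.sum_sub_distrib]

lemma isUnit_diffMat (l : ℕ) (R : Type*) [CommRing R] : IsUnit (diffMat l R) := by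
  rw [Matrix.isUnit_iff_isUnit_det, Matrix.det_of_isLowerTriangular]
  · simp [diffMat]
  · intro i j hij
    have : i < j := hij
    have h1 : j ≠ i := this.ne'
    have h2 : ¬ (j.val + 1 = i.val) := by omega
    simp [diffMat, h1, h2]

/-- In the orthonormal basis the reflection `w̃_j`, `j < l`, swaps two consecutive coordinates. -/
lemma diffMat_mul_weylB {R : Type*} [CommRing R] {n : ℕ} (j : Fin (n + 1)) :
    diffMat (n + 2) R * weylB (n + 2) R (j.val + 1) =
      (Equiv.swap j.castSucc j.succ).toPEquiv.toMatrix * diffMat (n + 2) R := by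
  rw [PEquiv.toMatrix_toPEquiv_mul]
  ext p q
  rw [Matrix.submatrix_apply]
  have hj := j.isLt
  have hq := q.isLt
  induction p using Fin.cases with
  | zero =>
    rw [diffMat_mul_zero]
    simp only [weylB, diffMat, Matrix.of_apply, Equiv.swap_apply_def, Fin.ext_iff, Fin.val_succ,
      Fin.val_castSucc, id, Fin.val_zero]
    grind
  | succ p =>
    rw [diffMat_mul_succ]
    have hp := p.isLt
    simp only [weylB, diffMat, Matrix.of_apply, Equiv.swap_apply_def, Fin.ext_iff, Fin.val_succ,
      Fin.val_castSucc, id]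
    grind

/-- In the orthonormal basis the reflection `w̃_l` negates the last coordinate. -/
lemma diffMat_mul_weylB_last {R : Type*} [CommRing R] {n : ℕ} :
    diffMat (n + 2) R * weylB (n + 2) R (n + 2) =
      Matrix.diagonal (fun i => if i = Fin.last (n + 1) then (-1 : R) else 1) *
        diffMat (n + 2) R := by
  ext p q
  rw [Matrix.diagonal_mul]
  have hq := q.isLt
  induction p using Fin.cases with
  | zero =>
    rw [diffMat_mul_zero]
    simp only [weylB, diffMat, Matrix.of_apply, Fin.ext_iff, Fin.val_zero, Fin.val_last]
    grind
  | succ p =>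
    rw [diffMat_mul_succ]
    have hp := p.isLt
    simp only [weylB, diffMat, Matrix.of_apply, Fin.ext_iff, Fin.val_succ,
      Fin.val_castSucc, Fin.val_last]
    grind

/-! ### Matrices invariant under permutations of coordinates -/

lemma commute_perm_iff {R : Type*} [CommRing R] {N : Type*} [Fintype N] [DecidableEq N]
    (B : Matrix N N R) (σ : Equiv.Perm N) :
    B * σ.toPEquiv.toMatrix = σ.toPEquiv.toMatrix * B ↔ ∀ p q, B (σ p) (σ q) = B p q := by
  rw [PEquiv.toMatrix_toPEquiv_mul, PEquiv.mul_toMatrix_toPEquiv]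
  constructor
  · intro h p q
    have := congrFun (congrFun h p) (σ q)
    simpa using this.symm
  · intro h
    ext p q
    have := h p (σ.symm q)
    simpa using this.symm

/-- Invariance under the adjacent swaps gives invariance under all transpositions of the
coordinates other than the last. -/
lemma swap_invariant {R : Type*} {n : ℕ} (B : Matrix (Fin (n + 2)) (Fin (n + 2)) R)
    (h : ∀ j : Fin n, ∀ p q,
      B (Equiv.swap j.castSucc.castSucc j.succ.castSucc p)
        (Equiv.swap j.castSucc.castSucc j.succ.castSucc q) = B p q)
    (i j : Fin (n + 1)) (p q : Fin (n + 2)) :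
    B (Equiv.swap i.castSucc j.castSucc p) (Equiv.swap i.castSucc j.castSucc q) = B p q := by
  have key : ∀ (j i : Fin (n + 1)), i ≤ j → ∀ p q,
      B (Equiv.swap i.castSucc j.castSucc p) (Equiv.swap i.castSucc j.castSucc q) = B p q := by
    intro j
    induction j using Fin.induction with
    | zero =>
      intro i hi p q
      obtain rfl : i = 0 := by simpa using hi
      simp
    | succ j ih =>
      intro i hi p q
      rcases hi.eq_or_lt with rfl | hlt
      · simp
      · have hij : i ≤ j.castSucc := by
          rw [Fin.le_def]; rw [Fin.lt_def] at hlt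
          simp at hlt ⊢; omega
        rcases hij.eq_or_lt with rfl | hlt2
        · exact h j p q
        · have e : Equiv.swap i.castSucc j.succ.castSucc =
              Equiv.swap j.castSucc.castSucc j.succ.castSucc *
                Equiv.swap i.castSucc j.castSucc.castSucc *
                Equiv.swap j.castSucc.castSucc j.succ.castSucc := by
            ext x
            simp only [Fin.lt_def, Fin.val_castSucc, Fin.val_succ] at hlt hlt2
            simp only [Equiv.Perm.mul_apply, Equiv.swap_apply_def, Fin.ext_iff]
            grind
          rw [e]
          simp only [Equiv.Perm.mul_apply]
          rw [h, ih i hij, h]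
  rcases le_total i j with hij | hij
  · exact key j i hij p q
  · rw [Equiv.swap_comm]
    exact key i j hij p q

/-- A matrix fixed by all permutations of the coordinates other than the last is a block matrix
`[[a·1 + b·E, u], [v, d]]`. When only one other coordinate exists, `a` may be chosen to be `1`. -/
lemma block_form {R : Type*} [CommRing R] {n : ℕ} (B : Matrix (Fin (n + 2)) (Fin (n + 2)) R)
    (h : ∀ j : Fin n, ∀ p q,
      B (Equiv.swap j.castSucc.castSucc j.succ.castSucc p)
        (Equiv.swap j.castSucc.castSucc j.succ.castSucc q) = B p q) :
    ∃ a b u v : R, (n = 0 → a = 1) ∧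
      (∀ i j : Fin (n + 1), B i.castSucc j.castSucc = (if i = j then a else 0) + b) ∧
      (∀ i : Fin (n + 1), B i.castSucc (Fin.last _) = u) ∧
      (∀ i : Fin (n + 1), B (Fin.last _) i.castSucc = v) := by
  have inv := swap_invariant B h
  have hlast : ∀ i j : Fin (n + 1),
      Equiv.swap i.castSucc j.castSucc (Fin.last (n + 1)) = Fin.last (n + 1) := fun i j =>
    Equiv.swap_apply_of_ne_of_ne (Fin.castSucc_lt_last i).ne' (Fin.castSucc_lt_last j).ne'
  have hu : ∀ i : Fin (n + 1), B i.castSucc (Fin.last _) = B 0 (Fin.last _) := by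
    intro i
    have := inv 0 i (Fin.castSucc 0) (Fin.last _)
    rw [hlast, Equiv.swap_apply_left] at this
    simpa using this
  have hv : ∀ i : Fin (n + 1), B (Fin.last _) i.castSucc = B (Fin.last _) 0 := by
    intro i
    have := inv 0 i (Fin.last _) (Fin.castSucc 0)
    rw [hlast, Equiv.swap_apply_left] at this
    simpa using this
  have hd : ∀ i : Fin (n + 1), B i.castSucc i.castSucc = B 0 0 := by
    intro i
    have := inv 0 i (Fin.castSucc 0) (Fin.castSucc 0)
    rw [Equiv.swap_apply_left] at this
    simpa using this
  rcases n with _ | n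
  · refine ⟨1, B 0 0 - 1, B 0 (Fin.last _), B (Fin.last _) 0, fun _ => rfl, ?_, hu, hv⟩
    intro i j
    obtain rfl : i = 0 := Fin.fin_one_eq_zero i
    obtain rfl : j = 0 := Fin.fin_one_eq_zero j
    simp
  · refine ⟨B 0 0 - B 0 1, B 0 1, B 0 (Fin.last _), B (Fin.last _) 0, by simp, ?_, hu, hv⟩
    intro i j
    by_cases hij : i = j
    · subst hij
      simp [hd]
    · -- Move `i` to `0`, then the image of `j`, which is not `0`, to `1`.
      have step : ∀ j' : Fin (n + 2), j' ≠ 0 →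
          B (Fin.castSucc 0) j'.castSucc = B 0 1 := by
        intro j' hj'
        have := inv 1 j' (Fin.castSucc 0) (Fin.castSucc 1)
        rw [Equiv.swap_apply_left, Equiv.swap_apply_of_ne_of_ne] at this
        · simpa using this
        · simp
        · intro h0; exact hj' (Fin.castSucc_injective _ h0).symm
      have h2 := inv i 0 i.castSucc j.castSucc
      rw [Equiv.swap_apply_left] at h2
      rw [if_neg hij, zero_add, ← h2]
      by_cases hj : j = 0
      · subst hj
        rw [Equiv.swap_apply_right]
        exact step i hij
      · rw [Equiv.swap_apply_of_ne_of_ne]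
        · exact step j hj
        · intro h0; exact hij (Fin.castSucc_injective _ h0).symm
        · intro h0; exact hj (Fin.castSucc_injective _ h0)

/-! ### Reflections -/

lemma isUnit_of_sub_mem {R : Type*} [CommRing R] [IsLocalRing R] {x y : R} (hy : IsUnit y)
    (h : x - y ∈ IsLocalRing.maximalIdeal R) : IsUnit x := by
  by_contra hx
  have hx' : x ∈ IsLocalRing.maximalIdeal R := hx
  have : y ∈ IsLocalRing.maximalIdeal R := by
    simpa using Ideal.sub_mem _ hx' h
  exact this hy

/-- The diagonal matrix `diag(1, …, 1, -1)`, which is `w̃_l` in the orthonormal basis. -/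
def lastNeg (n : ℕ) (R : Type*) [CommRing R] : Matrix (Fin (n + 2)) (Fin (n + 2)) R :=
  Matrix.diagonal (fun i => if i = Fin.last (n + 1) then (-1 : R) else 1)

/-- The vector `(p, …, p, 1, p, …, p)` with `1` at position `c`. -/
def spike {R : Type*} [CommRing R] {n : ℕ} (c : Fin (n + 2)) (p : R) : Fin (n + 2) → R :=
  fun i => if i = c then 1 else p

/-- An involution congruent to `diag(1, …, 1, -1)` and invariant under permutations of the
other coordinates is a reflection; the relation between `k`, `p`, `q` says `k (f · z) = 2`. -/
lemma reflection_form {R : Type*} [CommRing R] [IsLocalRing R] (h2 : IsUnit (2 : R)) {n : ℕ}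
    (B : Matrix (Fin (n + 2)) (Fin (n + 2)) R) (hB : B * B = 1)
    (hcong : ∀ p q, (B - lastNeg n R) p q ∈ IsLocalRing.maximalIdeal R)
    (h : ∀ j : Fin n, ∀ p q,
      B (Equiv.swap j.castSucc.castSucc j.succ.castSucc p)
        (Equiv.swap j.castSucc.castSucc j.succ.castSucc q) = B p q) :
    ∃ k p q : R, IsUnit k ∧ p ∈ IsLocalRing.maximalIdeal R ∧ q ∈ IsLocalRing.maximalIdeal R ∧
      k * (1 + (n + 1) * (p * q)) = 2 ∧
      B = 1 - k • Matrix.vecMulVec (spike (Fin.last _) p) (spike (Fin.last _) q) := by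
  obtain ⟨a, b, u, v, ha, hab, hu, hv⟩ := block_form B h
  obtain ⟨d, hd⟩ : ∃ d, B (Fin.last _) (Fin.last _) = d := ⟨_, rfl⟩
  have hne : ∀ i : Fin (n + 1), Fin.last (n + 1) ≠ i.castSucc :=
    fun i => (Fin.castSucc_lt_last i).ne'
  have hne' : ∀ i : Fin (n + 1), i.castSucc ≠ Fin.last (n + 1) :=
    fun i => (Fin.castSucc_lt_last i).ne
  have e1 : ∀ i j : Fin (n + 1), (if i = j then a * a else 0) + 2 * a * b + (n + 1) * (b * b)
      + u * v = if i = j then 1 else 0 := by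
    intro i j
    have := congrFun (congrFun hB i.castSucc) j.castSucc
    rw [Matrix.mul_apply, Fin.sum_univ_castSucc] at this
    simp only [hab, hu, hv, Matrix.one_apply, Fin.castSucc_inj, add_mul, mul_add,
      Finset.sum_add_distrib] at this
    simp at this
    rw [← this]
    split_ifs <;> ring
  have e2 : (n + 1) * (u * v) + d * d = 1 := by
    have := congrFun (congrFun hB (Fin.last _)) (Fin.last _)
    rw [Matrix.mul_apply, Fin.sum_univ_castSucc] at this
    simp only [hu, hv, hd] at this
    simp at this
    linear_combination this
  have cu : u ∈ IsLocalRing.maximalIdeal R := by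
    have := hcong (Fin.castSucc 0) (Fin.last _)
    rw [Matrix.sub_apply, lastNeg, Matrix.diagonal_apply_ne _ (hne' 0), hu, sub_zero] at this
    exact this
  have cv : v ∈ IsLocalRing.maximalIdeal R := by
    have := hcong (Fin.last _) (Fin.castSucc 0)
    rw [Matrix.sub_apply, lastNeg, Matrix.diagonal_apply_ne _ (hne 0), hv, sub_zero] at this
    exact this
  have cd : d + 1 ∈ IsLocalRing.maximalIdeal R := by
    have := hcong (Fin.last _) (Fin.last _)
    rw [Matrix.sub_apply, lastNeg, Matrix.diagonal_apply_eq, hd, if_pos rfl, sub_neg_eq_add] at this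
    exact this
  have cab : a + b - 1 ∈ IsLocalRing.maximalIdeal R := by
    have := hcong (Fin.castSucc 0) (Fin.castSucc 0)
    rw [Matrix.sub_apply, lastNeg, Matrix.diagonal_apply_eq, hab, if_pos rfl, if_neg (hne' 0)]
      at this
    exact this
  have a1 : a = 1 := by
    rcases n with _ | n
    · exact ha rfl
    · have cb : b ∈ IsLocalRing.maximalIdeal R := by
        have := hcong (Fin.castSucc 0) (Fin.castSucc 1)
        rw [Matrix.sub_apply, lastNeg, Matrix.diagonal_apply_ne _ (by simp), hab,
          if_neg (by simp), zero_add, sub_zero] at this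
        exact this
      have e00 := e1 0 0
      have e01 := e1 0 1
      rw [if_pos rfl, if_pos rfl] at e00
      rw [if_neg (by simp), if_neg (by simp)] at e01
      have ua : IsUnit (a + 1) := isUnit_of_sub_mem h2 (by
        have := Ideal.sub_mem _ cab cb
        ring_nf at this ⊢
        exact this)
      have : (a + 1) * (a - 1) = 0 := by linear_combination e00 - e01
      rw [ua.mul_right_eq_zero] at this
      exact sub_eq_zero.mp this
  subst a1
  have cb : b ∈ IsLocalRing.maximalIdeal R := by simpa using cab
  have e3 : 2 * b + (n + 1) * (b * b) + u * v = 0 := by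
    have := e1 0 0
    rw [if_pos rfl, if_pos rfl] at this
    linear_combination this
  have hd' : d = -(1 + (n + 1) * b) := by
    have ut : IsUnit (1 + (n + 1) * b - d) := isUnit_of_sub_mem h2 (by
      have := Ideal.sub_mem _ (Ideal.mul_mem_left _ ((n : R) + 1) cb) cd
      ring_nf at this ⊢
      exact this)
    have : (1 + (n + 1) * b - d) * (1 + (n + 1) * b + d) = 0 := by
      linear_combination (n + 1) * e3 - e2
    rw [ut.mul_right_eq_zero] at this
    linear_combination this
  have uk : IsUnit (2 + (n + 1) * b) := isUnit_of_sub_mem h2 (by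
    have := Ideal.mul_mem_left _ ((n : R) + 1) cb
    ring_nf at this ⊢
    exact this)
  obtain ⟨ki, hki⟩ := uk.exists_right_inv
  refine ⟨2 + (n + 1) * b, -u * ki, -v * ki, uk, Ideal.mul_mem_right _ _ (neg_mem cu),
    Ideal.mul_mem_right _ _ (neg_mem cv), ?_, ?_⟩
  · linear_combination ((n + 1) * u * v * ki - (n + 1) * b) * hki + (n + 1) * ki * e3
  · ext i j
    simp only [Matrix.sub_apply, Matrix.smul_apply, Matrix.vecMulVec_apply, spike, smul_eq_mul,
      Matrix.one_apply]
    induction i using Fin.lastCases with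
    | last =>
      induction j using Fin.lastCases with
      | last =>
        simp only [hd, hd', if_true]
        ring
      | cast j =>
        simp only [hv, hne, hne', if_true, if_false]
        linear_combination -v * hki
    | cast i =>
      induction j using Fin.lastCases with
      | last =>
        simp only [hu, hne', if_true, if_false]
        linear_combination -u * hki
      | cast j =>
        simp only [hab, hne', if_false, Fin.castSucc_inj]
        linear_combination (u * v * ki - b) * hki + ki * e3

lemma spike_dotProduct_spike {R : Type*} [CommRing R] {n : ℕ} (p q : R) :
    spike (Fin.last (n + 1)) q ⬝ᵥ spike (Fin.last n).castSucc p = n * (p * q) + p + q := by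
  have h1 : ∀ x : Fin n, x.val ≠ n + 1 := fun x => by omega
  have h2 : ∀ x : Fin n, x.val ≠ n := fun x => by omega
  simp only [dotProduct, spike, Fin.sum_univ_castSucc (n := n + 1), Fin.sum_univ_castSucc (n := n)]
  simp [Fin.ext_iff, h1, h2]
  ring

/-- If a reflection commutes with its conjugate by the swap of the last two coordinates, the
two reflections are orthogonal. -/
lemma orthogonality {R : Type*} [CommRing R] [IsLocalRing R] {n : ℕ}
    (B : Matrix (Fin (n + 2)) (Fin (n + 2)) R) {k p q : R} (hk : IsUnit k)
    (hp : p ∈ IsLocalRing.maximalIdeal R)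
    (hB : B = 1 - k • Matrix.vecMulVec (spike (Fin.last _) p) (spike (Fin.last _) q))
    {S : Matrix (Fin (n + 2)) (Fin (n + 2)) R}
    (hS : S = (Equiv.swap (Fin.last n).castSucc (Fin.last n).succ).toPEquiv.toMatrix)
    (hbraid : S * B * S * B = B * S * B * S) :
    n * (p * q) + p + q = 0 := by
  have hconj : S * B * S =
      1 - k • Matrix.vecMulVec (spike (Fin.last n).castSucc p) (spike (Fin.last n).castSucc q) := by
    have hsp : ∀ (r : R) i, spike (Fin.last (n + 1)) r
        (Equiv.swap (Fin.last n).castSucc (Fin.last n).succ i) =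
          spike (Fin.last n).castSucc r i := by
      intro r i
      simp only [spike]
      congr 1
      rw [← Fin.succ_last, Equiv.swap_apply_eq_iff, Equiv.swap_apply_right]
    rw [hS, PEquiv.toMatrix_toPEquiv_mul, PEquiv.mul_toMatrix_toPEquiv]
    ext i j
    simp only [hB, Matrix.submatrix_apply, id, Equiv.symm_swap, Matrix.sub_apply,
      Matrix.smul_apply, Matrix.vecMulVec_apply, hsp, Matrix.one_apply,
      EmbeddingLike.apply_eq_iff_eq]
  have hcomm : (S * B * S) * B = B * (S * B * S) := by
    rw [hbraid]; simp only [Matrix.mul_assoc]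
  rw [hconj, hB] at hcomm
  have g1 := spike_dotProduct_spike (n := n) p q
  have g2 : spike (Fin.last n).castSucc q ⬝ᵥ spike (Fin.last (n + 1)) p =
      n * (p * q) + p + q := by
    rw [dotProduct_comm, spike_dotProduct_spike]; ring
  have hentry := congrFun (congrFun hcomm (Fin.last (n + 1))) (Fin.last n).castSucc
  have hne : Fin.last (n + 1) ≠ (Fin.last n).castSucc := (Fin.castSucc_lt_last _).ne'
  simp only [sub_mul, mul_sub, one_mul, mul_one, Matrix.smul_mul, Matrix.mul_smul,
    Matrix.vecMulVec_mul_vecMulVec, g1, g2, Matrix.sub_apply, Matrix.smul_apply,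
    Matrix.vecMulVec_apply, smul_eq_mul, Pi.smul_apply] at hentry
  simp only [spike, hne, hne.symm, if_true, if_false] at hentry
  have upq : IsUnit (1 - p * q) := isUnit_of_sub_mem isUnit_one (by
    have := neg_mem (Ideal.mul_mem_right q _ hp)
    ring_nf at this ⊢
    exact this)
  have : (k * k * (1 - p * q)) * (n * (p * q) + p + q) = 0 := by
    linear_combination -hentry
  rwa [((hk.mul hk).mul upq).mul_right_eq_zero] at this

/-! ### The conjugating matrix -/

/-- The matrix `(1 - p)·1 + p·E`, with `E` the all-ones matrix. -/
def conjMat (n : ℕ) {R : Type*} [CommRing R] (p : R) : Matrix (Fin (n + 2)) (Fin (n + 2)) R :=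
  Matrix.of fun i j => (if i = j then 1 - p else 0) + p

lemma isUnit_conjMat {R : Type*} [CommRing R] [IsLocalRing R] (n : ℕ) {p : R}
    (hp : p ∈ IsLocalRing.maximalIdeal R) : IsUnit (conjMat n p) := by
  have hp0 : IsLocalRing.residue R p = 0 := (IsLocalRing.residue_eq_zero_iff p).mpr hp
  have h1 : (conjMat n p).map (IsLocalRing.residue R) = 1 := by
    ext i j
    by_cases hij : i = j <;> simp [conjMat, hp0, hij, Matrix.one_apply]
  rw [Matrix.isUnit_iff_isUnit_det]
  apply isUnit_of_map_unit (IsLocalRing.residue R)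
  rw [RingHom.map_det, RingHom.mapMatrix_apply, h1, Matrix.det_one]
  exact isUnit_one

/-- The last column of `conjMat n p` is the root `z`, and orthogonality makes `fᵀ C` vanish off the
last coordinate, so `C` carries `diag(1, …, 1, -1)` to the reflection `B`. -/
lemma conjMat_intertwines {R : Type*} [CommRing R] {n : ℕ}
    (B : Matrix (Fin (n + 2)) (Fin (n + 2)) R) {k p q : R}
    (hk : k * (1 + (n + 1) * (p * q)) = 2)
    (hB : B = 1 - k • Matrix.vecMulVec (spike (Fin.last _) p) (spike (Fin.last _) q))
    (horth : n * (p * q) + p + q = 0) :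
    B * conjMat n p = conjMat n p * lastNeg n R := by
  have hrow : Matrix.vecMul (spike (Fin.last _) q) (conjMat n p) =
      fun j => if j = Fin.last (n + 1) then 1 + (n + 1) * (p * q) else 0 := by
    ext j
    have hs : ∑ i, spike (Fin.last (n + 1)) q i = (n + 1) * q + 1 := by
      simp [Fin.sum_univ_castSucc (n := n + 1), spike]
    simp only [Matrix.vecMul, dotProduct, conjMat, Matrix.of_apply, mul_add,
      Finset.sum_add_distrib, ← Finset.sum_mul, hs]
    simp only [mul_ite, mul_zero, Finset.sum_ite_eq', Finset.mem_univ, if_true, spike]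
    split_ifs
    · ring
    · linear_combination horth
  rw [hB, sub_mul, one_mul, Matrix.smul_mul, Matrix.vecMulVec_mul, hrow]
  ext i j
  rw [lastNeg, Matrix.mul_diagonal]
  simp only [Matrix.sub_apply, Matrix.smul_apply, Matrix.vecMulVec_apply, smul_eq_mul, conjMat,
    Matrix.of_apply, spike]
  by_cases hj : j = Fin.last (n + 1)
  · subst hj
    by_cases hi : i = Fin.last (n + 1)
    · simp only [hi, if_true]
      linear_combination -hk
    · simp only [hi, if_true, if_false]
      linear_combination -p * hk
  · simp only [hj, if_false]
    ring

/-! ### Transfer to the original basis -/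

/-- Over a commutative local ring `R` with `1/2` and `l ≥ 2`: if an involution `A` is
congruent to `w̃_l` modulo the maximal ideal, commutes with `w̃ⱼ` for `1 ≤ j ≤ l−2`, and
satisfies `w̃_{l−1} A w̃_{l−1} A = A w̃_{l−1} A w̃_{l−1}`, then `A` is conjugate to `w̃_l`
by an invertible matrix commuting with `w̃₁, …, w̃_{l−1}`. -/
theorem stmt_5 {R : Type*} [CommRing R] [IsLocalRing R] [Invertible (2 : R)] {l : ℕ}
    (hl : 2 ≤ l)
    (A : Matrix (Fin l) (Fin l) R) (hA : A * A = 1)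
    (hcong : ∀ p q, (A - weylB l R l) p q ∈ IsLocalRing.maximalIdeal R)
    (hcomm : ∀ j, 1 ≤ j → j ≤ l - 2 → A * weylB l R j = weylB l R j * A)
    (hbraid : weylB l R (l - 1) * A * weylB l R (l - 1) * A =
      A * weylB l R (l - 1) * A * weylB l R (l - 1)) :
    ∃ C : (Matrix (Fin l) (Fin l) R)ˣ,
      (∀ j, 1 ≤ j → j ≤ l - 1 →
        (↑C : Matrix (Fin l) (Fin l) R) * weylB l R j =
          weylB l R j * (↑C : Matrix (Fin l) (Fin l) R)) ∧
      (↑C⁻¹ : Matrix (Fin l) (Fin l) R) * A * (↑C : Matrix (Fin l) (Fin l) R) =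
        weylB l R l := by
  obtain ⟨n, rfl⟩ : ∃ n, l = n + 2 := ⟨l - 2, by omega⟩
  have h2 : IsUnit (2 : R) := isUnit_of_invertible 2
  obtain ⟨D, hD⟩ := isUnit_diffMat (n + 2) R
  obtain ⟨E, hE⟩ : ∃ E : Matrix (Fin (n + 2)) (Fin (n + 2)) R, E = Units.val D⁻¹ := ⟨_, rfl⟩
  have hDi : D.val * E = 1 := by rw [hE]; exact D.mul_inv
  have hiD : E * D.val = 1 := by rw [hE]; exact D.inv_mul
  -- Conjugation by `D` turns the simple reflections into swaps and `diag(1, …, 1, -1)`.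
  have hW : ∀ j : Fin (n + 1), weylB (n + 2) R (j.val + 1) =
      E * (Equiv.swap j.castSucc j.succ).toPEquiv.toMatrix * D.val := by
    intro j
    rw [Matrix.mul_assoc, hD, ← diffMat_mul_weylB, ← hD, ← Matrix.mul_assoc, hiD, Matrix.one_mul]
  have hWl : weylB (n + 2) R (n + 2) = E * lastNeg n R * D.val := by
    rw [Matrix.mul_assoc, hD, lastNeg, ← diffMat_mul_weylB_last, ← hD, ← Matrix.mul_assoc, hiD,
      Matrix.one_mul]
  obtain ⟨B, rfl⟩ : ∃ B : Matrix (Fin (n + 2)) (Fin (n + 2)) R, A = E * B * D.val :=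
    ⟨D.val * A * E, by
      rw [Matrix.mul_assoc, Matrix.mul_assoc (_ * A), hiD, Matrix.mul_one, ← Matrix.mul_assoc, hiD,
        Matrix.one_mul]⟩
  have conj_mul : ∀ X Y : Matrix (Fin (n + 2)) (Fin (n + 2)) R,
      (E * X * D.val) * (E * Y * D.val) = E * (X * Y) * D.val := by
    intro X Y
    calc _ = E * X * (D * E) * Y * D.val := by simp only [Matrix.mul_assoc]
      _ = _ := by rw [hDi]; simp only [Matrix.mul_assoc, Matrix.one_mul]
  have conj_inj : ∀ X Y : Matrix (Fin (n + 2)) (Fin (n + 2)) R,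
      E * X * D.val = E * Y * D.val → X = Y := by
    intro X Y h
    have cancel : ∀ Z, D.val * (E * Z * D.val) * E = Z := by
      intro Z
      calc _ = (D.val * E) * Z * (D.val * E) := by simp only [Matrix.mul_assoc]
        _ = Z := by rw [hDi, Matrix.one_mul, Matrix.mul_one]
    rw [← cancel X, h, cancel]
  have hBB : B * B = 1 := by
    apply conj_inj
    rw [← conj_mul, hA, Matrix.mul_one, hiD]
  have hBcong : ∀ p q, (B - lastNeg n R) p q ∈ IsLocalRing.maximalIdeal R := by
    have e : B - lastNeg n R =
        D.val * (E * B * D.val - weylB (n + 2) R (n + 2)) * E := by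
      rw [hWl, ← sub_mul, ← mul_sub]
      calc _ = (D.val * E) * (B - lastNeg n R) * (D.val * E) := by
            rw [hDi, Matrix.one_mul, Matrix.mul_one]
        _ = _ := by simp only [Matrix.mul_assoc]
    intro p q
    rw [e, Matrix.mul_apply]
    refine Ideal.sum_mem _ fun i _ => Ideal.mul_mem_right _ _ ?_
    rw [Matrix.mul_apply]
    exact Ideal.sum_mem _ fun j _ => Ideal.mul_mem_left _ _ (hcong _ _)
  have hBinv : ∀ j : Fin n, ∀ p q,
      B (Equiv.swap j.castSucc.castSucc j.succ.castSucc p)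
        (Equiv.swap j.castSucc.castSucc j.succ.castSucc q) = B p q := by
    intro j
    have h := hcomm (j.castSucc.val + 1) (by omega) (by simp)
    rw [hW, conj_mul, conj_mul] at h
    exact (commute_perm_iff B _).mp (conj_inj _ _ h)
  obtain ⟨k, p, q, hk, hp, -, hkpq, hBeq⟩ := reflection_form h2 B hBB hBcong hBinv
  have horth : n * (p * q) + p + q = 0 := by
    refine orthogonality B hk hp hBeq rfl ?_
    have hw : weylB (n + 2) R (n + 2 - 1) =
        E * (Equiv.swap (Fin.last n).castSucc (Fin.last n).succ).toPEquiv.toMatrix * D.val :=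
      hW (Fin.last n)
    rw [hw] at hbraid
    simp only [conj_mul] at hbraid
    exact conj_inj _ _ hbraid
  have hint := conjMat_intertwines B hkpq hBeq horth
  obtain ⟨C, hC⟩ := isUnit_conjMat n hp
  have hcoe : ((D⁻¹ * C * D : (Matrix (Fin (n + 2)) (Fin (n + 2)) R)ˣ) :
      Matrix (Fin (n + 2)) (Fin (n + 2)) R) = E * conjMat n p * D.val := by
    simp [hC, hE]
  refine ⟨D⁻¹ * C * D, ?_, ?_⟩
  · intro j hj1 hj2
    obtain ⟨j, rfl⟩ : ∃ i : Fin (n + 1), j = i.val + 1 := ⟨⟨j - 1, by omega⟩, by simp; omega⟩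
    rw [hcoe, hW, conj_mul, conj_mul, (commute_perm_iff _ _).mpr]
    intro p q
    simp [conjMat]
  · rw [Matrix.mul_assoc, Units.inv_mul_eq_iff_eq_mul, hcoe, hWl, conj_mul, conj_mul, hint]
end

section
/- Let R be a commutative ring and let N ⊆ M be submodules of R^n such that both N and M are free R-modules of rank 1 and both are direct summands of R^n. Then N = M. -/
/-!
Write `N = Rx` and `M = Ry` with `x`, `y` basis vectors, so `x = r y` for some `r`. The component
of `y` in `N` along a complement of `N` is `s x` for some `s`; projecting `x = r y` to `N` gives
`x = r s x`, hence `r s = 1` because `x` is a basis vector. Then `y = s x` lies in `N`.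
-/

/-- If `N ⊆ M` are submodules of `Rⁿ` over a commutative ring, both free of rank 1 and both
direct summands of `Rⁿ`, then `N = M`. -/
theorem stmt_8 {R : Type*} [CommRing R] {n : ℕ} (N M : Submodule R (Fin n → R))
    (hNM : N ≤ M)
    (hNfree : Module.Free R N) (hNrank : Module.finrank R N = 1)
    (hMfree : Module.Free R M) (hMrank : Module.finrank R M = 1)
    (hN : ∃ N', IsCompl N N') (hM : ∃ M', IsCompl M M') :
    N = M := by
  -- Over the zero ring `Rⁿ` has only one submodule.
  rcases subsingleton_or_nontrivial R with hR | hR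
  · exact Subsingleton.elim _ _
  let bN := Module.basisUnique Unit hNrank
  let bM := Module.basisUnique Unit hMrank
  have hspanN : ∀ v ∈ N, ∃ c : R, c • (bN () : Fin n → R) = v := fun v hv =>
    ⟨bN.repr ⟨v, hv⟩ (), by
      simpa using congrArg Subtype.val (bN.sum_repr ⟨v, hv⟩)⟩
  have hspanM : ∀ v ∈ M, ∃ c : R, c • (bM () : Fin n → R) = v := fun v hv =>
    ⟨bM.repr ⟨v, hv⟩ (), by
      simpa using congrArg Subtype.val (bM.sum_repr ⟨v, hv⟩)⟩
  have hindep : ∀ c : R, c • (bN () : Fin n → R) = 0 → c = 0 := fun c hc => by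
    have h : c • bN () = 0 := Subtype.ext hc
    simpa using congrArg (fun v => bN.repr v ()) h
  obtain ⟨N', hN'⟩ := hN
  generalize hx : (bN () : Fin n → R) = x at *
  generalize hy : (bM () : Fin n → R) = y at *
  have hxN : x ∈ N := hx ▸ (bN ()).2
  obtain ⟨r, hr⟩ := hspanM x (hNM hxN)
  obtain ⟨a, ha, b, hb, hab⟩ := Submodule.mem_sup.1
    (hN'.sup_eq_top ▸ Submodule.mem_top : y ∈ N ⊔ N')
  obtain ⟨s, hs⟩ := hspanN a ha
  have hrb : (1 - r * s) • x = r • b := by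
    rw [sub_smul, one_smul, mul_smul, hs, sub_eq_iff_eq_add, ← smul_add, add_comm b a, hab, hr]
  have hrs : 1 - r * s = 0 := hindep _ <|
    Submodule.disjoint_def.1 hN'.disjoint _ (N.smul_mem _ hxN) (hrb ▸ N'.smul_mem r hb)
  have hyN : y ∈ N := by
    have h : s • x = y := by
      rw [← hr, smul_smul, mul_comm, ← sub_eq_zero.1 hrs, one_smul]
    exact h ▸ N.smul_mem s hxN
  refine le_antisymm hNM fun v hv => ?_
  obtain ⟨c, rfl⟩ := hspanM v hv
  exact N.smul_mem c hyN
end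

section
/- Let R be a commutative local ring in which 2 is invertible, let b be an n×n matrix over R with b² = 1, and let N ⊆ R^n be a submodule that is free of rank 1, is a direct summand of R^n, and satisfies b·N ⊆ N. Then either b x = x for all x ∈ N, or b x = −x for all x ∈ N. -/
/-!
On a generator `e` of `N` the involution acts by a scalar `c`, and freeness gives `c * c = 1`, that is
`(c + 1) * (1 - c) = 0`. The two factors add up to the unit `2`, so in a local ring one of them is a
unit and the other one vanishes.
-/

/-- Over a commutative local ring with `1/2`, if `b` is an `n × n` involution and `N ⊆ Rⁿ`
is a free rank-1 direct summand invariant under `b`, then `b` acts on `N` as `+1` or as `−1`. -/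
theorem stmt_9 {R : Type*} [CommRing R] [IsLocalRing R] [Invertible (2 : R)] {n : ℕ}
    (b : Matrix (Fin n) (Fin n) R) (hb : b * b = 1)
    (N : Submodule R (Fin n → R))
    (hfree : Module.Free R N) (hrank : Module.finrank R N = 1)
    (hsummand : ∃ N', IsCompl N N')
    (hinv : ∀ x ∈ N, Matrix.toLin' b x ∈ N) :
    (∀ x ∈ N, Matrix.toLin' b x = x) ∨ (∀ x ∈ N, Matrix.toLin' b x = -x) := by
  let B := Module.basisUnique Unit hrank
  have hspan : ∀ x ∈ N, ∃ r : R, x = r • (B () : Fin n → R) := by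
    intro x hx
    refine ⟨B.repr ⟨x, hx⟩ (), ?_⟩
    have h := B.sum_repr ⟨x, hx⟩
    simpa using (congrArg Subtype.val h).symm
  obtain ⟨c, hc⟩ := hspan _ (hinv _ (B ()).2)
  have hbb : Matrix.toLin' b (Matrix.toLin' b (B () : Fin n → R)) = B () := by
    rw [← LinearMap.comp_apply, ← Matrix.toLin'_mul, hb, Matrix.toLin'_one, LinearMap.id_apply]
  rw [hc, map_smul, hc, smul_smul] at hbb
  have hcc : c * c = 1 := by
    have h : (c * c) • B () = B () := Subtype.ext hbb
    simpa using congrArg (fun y => B.repr y ()) h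
  have hact : ∀ x ∈ N, Matrix.toLin' b x = c • x := by
    intro x hx
    obtain ⟨r, rfl⟩ := hspan x hx
    rw [map_smul, hc, smul_comm]
  have hprod : (c + 1) * (1 - c) = 0 := by linear_combination -hcc
  have htwo : IsUnit ((c + 1) + (1 - c)) := by
    have h : (c + 1) + (1 - c) = 2 := by ring
    rw [h]
    exact isUnit_of_invertible 2
  rcases IsLocalRing.isUnit_or_isUnit_of_isUnit_add htwo with h | h
  · left
    have h1 : c = 1 := (sub_eq_zero.mp (h.mul_right_eq_zero.mp hprod)).symm
    intro x hx
    rw [hact x hx, h1, one_smul]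
  · right
    have h1 : c = -1 := eq_neg_of_add_eq_zero_left (h.mul_left_eq_zero.mp hprod)
    intro x hx
    rw [hact x hx, h1, neg_one_smul]
end

section
/- Let R be a commutative ring in which every element is a sum of two invertible elements, let S be a commutative ring, and let f : R → S be an additive map (f(x+y) = f(x) + f(y) for all x, y ∈ R) with f(1) = 1 such that f(uv) = f(u) f(v) for all invertible u, v ∈ R. Then f is a ring homomorphism, i.e., f(xy) = f(x) f(y) for all x, y ∈ R. -/
/-- If every element of a commutative ring `R` is a sum of two units, `S` is a commutative
ring, and `f : R → S` is additive, sends `1` to `1`, and is multiplicative on units, then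
`f` is multiplicative everywhere (hence a ring homomorphism). -/
theorem stmt_10 {R S : Type*} [CommRing R] [CommRing S]
    (hR : ∀ x : R, ∃ u v : R, IsUnit u ∧ IsUnit v ∧ x = u + v)
    (f : R → S) (hadd : ∀ x y : R, f (x + y) = f x + f y) (hone : f 1 = 1)
    (hmul : ∀ u v : R, IsUnit u → IsUnit v → f (u * v) = f u * f v) :
    ∀ x y : R, f (x * y) = f x * f y := by
  intro x y
  -- Split both factors into units; both sides then expand bilinearly into four unit products.
  obtain ⟨a, b, ha, hb, rfl⟩ := hR x
  obtain ⟨c, d, hc, hd, rfl⟩ := hR y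
  rw [add_mul, mul_add, mul_add]
  simp only [hadd, hmul a c ha hc, hmul a d ha hd, hmul b c hb hc, hmul b d hb hd]
  ring
end
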